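/- There exists a constant c > 0 such that for all x, y ∈ (0, 1), |a(x) − a(y)| ≤ c·|x − y|^{1/2}; in other words, the function a is Hölder continuous of exponent 1/2 on (0, 1). -/

import Mathlib

/-- The partial sum `Σ_w(i, n) = w(i) + w(i+1) + ⋯ + w(i+n−1)`. -/
def pSum (w : ℕ → ℤ) (i n : ℕ) : ℤ := ∑ j ∈ Finset.range n, w (i + j)

/-- The `j`-th digit (`j ≥ 1`) of the 4-adic expansion of `x > 0` chosen with
infinitely many digits `≠ 3` (the greedy expansion):
`x_j = ⌊4^j x⌋ − 4⌊4^(j−1) x⌋`. -/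
noncomputable def digit (x : ℝ) (j : ℕ) : ℤ :=
  ⌊(4 : ℝ) ^ j * x⌋ - 4 * ⌊(4 : ℝ) ^ (j - 1) * x⌋

/-- The coefficient `d`: `d(0) = d(2) = 1`, `d(1) = 0`, `d(3) = 2`. -/
def dcoef (y : ℤ) : ℤ := if y = 0 ∨ y = 2 then 1 else if y = 1 then 0 else 2

/-- `a_j(x) = −1` if `4^j x < 1`, and `a_j(x) = ΔM(⌊4^j x⌋ − 1)` otherwise,
where `ΔM(n) = M(n+1) − M(n)`. -/
noncomputable def acoef (M : ℕ → ℤ) (x : ℝ) (j : ℕ) : ℤ :=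
  if (4 : ℝ) ^ j * x < 1 then -1
  else M (⌊(4 : ℝ) ^ j * x⌋).toNat - M ((⌊(4 : ℝ) ^ j * x⌋).toNat - 1)

/-- `a(x) = Σ_{j ≥ 1} d(x_j) a_j(x) 2^{−j}`. -/
noncomputable def afun (M : ℕ → ℤ) (x : ℝ) : ℝ :=
  ∑' j : ℕ, ((dcoef (digit x (j + 1)) * acoef M x (j + 1) : ℤ) : ℝ) / 2 ^ (j + 1)

/-!
Write `S(m) = r(0) + ⋯ + r(m−1)`. Since `S(4m) = 2S(m)`, every window of length `4n + k` is, up to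
a bounded boundary term, twice a window of length about `n`. Rounding both ends of a window to
multiples of `4` this way shows that a window of length `n` has sum `O(√n)`, hence
`|M(m) − M(n)| = O(√|m − n|)`.

Keeping track of the boundary terms instead gives, for `n ≥ 1`, `M(4n) = 2M(n) + 2`,
`M(4n+1) = 2M(n) + 1`, `M(4n+2) = M(n) + M(n+1) + 1` and `M(4n+3) = 2M(n+1) + 1`. The upper bounds
hold for every window. They are attained because there is always a maximal window `[i+1, i+n+1)`
with `r(2i+1) = −1` and `r(2(i+n)+1) = 1`, and such windows reproduce under the recursion.

The recursion says exactly that the series defining `a(x)` telescopes to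
`a(x) = lim_J (M(⌊4^J x⌋) + 1) / 2^J − (M(⌊x⌋) + 1)`, and the bound on `M(m) − M(n)` passes to this
limit.
-/

/-- The prefix sum `S(n) = w(0) + ⋯ + w(n−1)`, in terms of which the sum over any window is a
difference. -/
def prefixSum (w : ℕ → ℤ) (n : ℕ) : ℤ := ∑ j ∈ Finset.range n, w j

section WindowSums

variable {w : ℕ → ℤ}

theorem prefixSum_succ (w : ℕ → ℤ) (n : ℕ) : prefixSum w (n + 1) = prefixSum w n + w n :=
  Finset.sum_range_succ w n

theorem pSum_eq_prefixSum_sub (w : ℕ → ℤ) (i n : ℕ) :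
    pSum w i n = prefixSum w (i + n) - prefixSum w i :=
  eq_sub_of_add_eq' (Finset.sum_range_add w i n).symm

theorem pSum_add (w : ℕ → ℤ) (i m n : ℕ) : pSum w i (m + n) = pSum w i m + pSum w (i + m) n := by
  simp only [pSum_eq_prefixSum_sub, add_assoc]
  ring

theorem pSum_succ (w : ℕ → ℤ) (i n : ℕ) : pSum w i (n + 1) = pSum w i n + w (i + n) :=
  Finset.sum_range_succ _ n

theorem pSum_succ' (w : ℕ → ℤ) (i n : ℕ) : pSum w i (n + 1) = w i + pSum w (i + 1) n := by
  rw [add_comm, pSum_add]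
  simp [pSum]

theorem abs_pSum_le (hw : ∀ n, |w n| ≤ 1) (i n : ℕ) : |pSum w i n| ≤ n :=
  (Finset.abs_sum_le_sum_abs _ _).trans <|
    (Finset.sum_le_card_nsmul _ _ 1 fun j _ => hw (i + j)).trans_eq (by simp)

theorem pSum_modEq_two (hw : ∀ n, Odd (w n)) (i n : ℕ) : pSum w i n ≡ n [ZMOD 2] := by
  induction n with
  | zero => rfl
  | succ n ih =>
    rw [pSum_succ, Nat.cast_succ]
    exact ih.add (Int.odd_iff.1 (hw (i + n)))

end WindowSums

/-- `M n` is the maximum of the sums of `w` over windows of length `n`. -/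
def IsMaxSum (w M : ℕ → ℤ) : Prop :=
  ∀ n, IsGreatest (Set.range fun i => pSum w i n) (M n)

namespace IsMaxSum

variable {w M : ℕ → ℤ}

theorem pSum_le (hM : IsMaxSum w M) (i n : ℕ) : pSum w i n ≤ M n :=
  (hM n).2 ⟨i, rfl⟩

theorem exists_pSum_eq (hM : IsMaxSum w M) (n : ℕ) : ∃ i, pSum w i n = M n :=
  (hM n).1

theorem le_of_forall_pSum_le (hM : IsMaxSum w M) {n : ℕ} {B : ℤ} (hB : ∀ i, pSum w i n ≤ B) :
    M n ≤ B := by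
  obtain ⟨i, hi⟩ := hM.exists_pSum_eq n
  exact hi ▸ hB i

theorem map_zero (hM : IsMaxSum w M) : M 0 = 0 := by
  obtain ⟨i, hi⟩ := hM.exists_pSum_eq 0
  simpa [pSum] using hi.symm

theorem exists_abs_sub_le_abs_pSum (hM : IsMaxSum w M) (n k : ℕ) :
    ∃ i, |M (n + k) - M n| ≤ |pSum w i k| := by
  obtain ⟨i, hi⟩ := hM.exists_pSum_eq n
  obtain ⟨j, hj⟩ := hM.exists_pSum_eq (n + k)
  have lower : pSum w (i + n) k ≤ M (n + k) - M n := by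
    linarith [hM.pSum_le i (n + k), pSum_add w i n k]
  have upper : M (n + k) - M n ≤ pSum w (j + n) k := by
    linarith [hM.pSum_le j n, pSum_add w j n k]
  rcases le_total 0 (M (n + k) - M n) with hsign | hsign
  · exact ⟨j + n, abs_le_abs_of_nonneg hsign upper⟩
  · exact ⟨i + n, abs_le_abs_of_nonpos hsign lower⟩

theorem abs_succ_sub_le (hM : IsMaxSum w M) (hw : ∀ n, |w n| ≤ 1) (n : ℕ) :
    |M (n + 1) - M n| ≤ 1 := by
  obtain ⟨i, hi⟩ := hM.exists_abs_sub_le_abs_pSum n 1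
  simpa using hi.trans (abs_pSum_le hw i 1)

theorem modEq_two (hM : IsMaxSum w M) (hw : ∀ n, Odd (w n)) (n : ℕ) : M n ≡ n [ZMOD 2] := by
  obtain ⟨i, hi⟩ := hM.exists_pSum_eq n
  exact hi ▸ pSum_modEq_two hw i n

theorem succ_eq_add_one_or_sub_one (hM : IsMaxSum w M) (hw : ∀ n, w n = 1 ∨ w n = -1) (n : ℕ) :
    M (n + 1) = M n + 1 ∨ M (n + 1) = M n - 1 := by
  have hodd : ∀ n, Odd (w n) := fun n => by rcases hw n with h | h <;> simp [h]
  have hbound := abs_le.1 (hM.abs_succ_sub_le (fun n => by rcases hw n with h | h <;> simp [h]) n)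
  have hn : M n % 2 = n % 2 := hM.modEq_two hodd n
  have hn' : M (n + 1) % 2 = (n + 1 : ℕ) % 2 := hM.modEq_two hodd (n + 1)
  lia

end IsMaxSum

/-- The defining recursion of the Rudin–Shapiro sequence. -/
structure IsRudinShapiro (r : ℕ → ℤ) : Prop where
  zero : r 0 = 1
  two_mul : ∀ n, r (2 * n) = r n
  two_mul_add_one : ∀ n, r (2 * n + 1) = (-1) ^ n * r n

/-- The sums of the windows `[i + 1, i + n + 1)` of length `n` with `r (2 * i + 1) = -1` and
`r (2 * (i + n) + 1) = 1`. These are the boundary signs for which the window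
`[4 * i + 3, 4 * (i + n) + 3)` has the largest possible sum, twice the original one plus `2`. -/
def framedSums (r : ℕ → ℤ) (n : ℕ) : Set ℤ :=
  {s | ∃ i, pSum r (i + 1) n = s ∧ r (2 * i + 1) = -1 ∧ r (2 * (i + n) + 1) = 1}

theorem IsMaxSum.eq_of_mem_framedSums {w M : ℕ → ℤ} (hM : IsMaxSum w M) {n : ℕ} {s : ℤ}
    (hle : M n ≤ s) (hs : s ∈ framedSums w n) : M n = s := by
  obtain ⟨i, rfl, -, -⟩ := hs
  exact hle.antisymm (hM.pSum_le (i + 1) n)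

namespace IsRudinShapiro

variable {r : ℕ → ℤ}

theorem eq_one_or_neg_one (h : IsRudinShapiro r) (n : ℕ) : r n = 1 ∨ r n = -1 := by
  induction n using Nat.evenOddRec with
  | h0 => exact .inl h.zero
  | h_even n ih => rwa [h.two_mul]
  | h_odd n ih =>
    rw [h.two_mul_add_one]
    rcases neg_one_pow_eq_or ℤ n with e | e <;> rcases ih with ih | ih <;> simp [e, ih]

theorem abs_le_one (h : IsRudinShapiro r) (n : ℕ) : |r n| ≤ 1 := by
  rcases h.eq_one_or_neg_one n with e | e <;> simp [e]

theorem le_one (h : IsRudinShapiro r) (n : ℕ) : r n ≤ 1 := (abs_le.1 (h.abs_le_one n)).2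

theorem neg_one_le (h : IsRudinShapiro r) (n : ℕ) : -1 ≤ r n := (abs_le.1 (h.abs_le_one n)).1

theorem four_mul (h : IsRudinShapiro r) (n : ℕ) : r (4 * n) = r n := by
  rw [show 4 * n = 2 * (2 * n) by ring, h.two_mul, h.two_mul]

theorem four_mul_add_one (h : IsRudinShapiro r) (n : ℕ) : r (4 * n + 1) = r n := by
  rw [show 4 * n + 1 = 2 * (2 * n) + 1 by ring, h.two_mul_add_one, h.two_mul,
    (even_two_mul n).neg_one_pow, one_mul]

theorem four_mul_add_two (h : IsRudinShapiro r) (n : ℕ) : r (4 * n + 2) = r (2 * n + 1) := by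
  rw [show 4 * n + 2 = 2 * (2 * n + 1) by ring, h.two_mul]

theorem four_mul_add_three (h : IsRudinShapiro r) (n : ℕ) : r (4 * n + 3) = -r (2 * n + 1) := by
  rw [show 4 * n + 3 = 2 * (2 * n + 1) + 1 by ring, h.two_mul_add_one,
    (odd_two_mul_add_one n).neg_one_pow, neg_one_mul]

theorem eight_mul_add_one (h : IsRudinShapiro r) (n : ℕ) : r (2 * (4 * n) + 1) = r n := by
  rw [show 2 * (4 * n) + 1 = 4 * (2 * n) + 1 by ring, h.four_mul_add_one, h.two_mul]

theorem eight_mul_add_five (h : IsRudinShapiro r) (n : ℕ) :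
    r (2 * (4 * n + 2) + 1) = r (2 * n + 1) := by
  rw [show 2 * (4 * n + 2) + 1 = 4 * (2 * n + 1) + 1 by ring, h.four_mul_add_one]

theorem eight_mul_add_seven (h : IsRudinShapiro r) (n : ℕ) :
    r (2 * (4 * n + 3) + 1) = r (2 * n + 1) := by
  rw [show 2 * (4 * n + 3) + 1 = 4 * (2 * n + 1) + 3 by ring, h.four_mul_add_three,
    show 2 * (2 * n + 1) + 1 = 4 * n + 3 by ring, h.four_mul_add_three, neg_neg]

theorem prefixSum_four_mul (h : IsRudinShapiro r) (n : ℕ) :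
    prefixSum r (4 * n) = 2 * prefixSum r n := by
  induction n with
  | zero => simp [prefixSum]
  | succ n ih =>
    rw [show 4 * (n + 1) = 4 * n + 3 + 1 by ring]
    simp only [prefixSum_succ, ih, h.four_mul, h.four_mul_add_one, h.four_mul_add_two,
      h.four_mul_add_three]
    ring

theorem prefixSum_four_mul_add_one (h : IsRudinShapiro r) (n : ℕ) :
    prefixSum r (4 * n + 1) = prefixSum r n + prefixSum r (n + 1) := by
  rw [prefixSum_succ, h.prefixSum_four_mul, h.four_mul, prefixSum_succ]
  ring

theorem prefixSum_four_mul_add_two (h : IsRudinShapiro r) (n : ℕ) :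
    prefixSum r (4 * n + 2) = 2 * prefixSum r (n + 1) := by
  rw [prefixSum_succ, h.prefixSum_four_mul_add_one, h.four_mul_add_one, prefixSum_succ]
  ring

theorem prefixSum_four_mul_add_three (h : IsRudinShapiro r) (n : ℕ) :
    prefixSum r (4 * n + 3) = 2 * prefixSum r (n + 1) + r (2 * n + 1) := by
  rw [prefixSum_succ, h.prefixSum_four_mul_add_two, h.four_mul_add_two]

/-! ### The square-root bound -/

theorem abs_prefixSum_sub_two_mul_le (h : IsRudinShapiro r) (m : ℕ) :
    |prefixSum r m - 2 * prefixSum r ((m + 2) / 4)| ≤ 1 := by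
  obtain ⟨a, rfl | rfl | rfl | rfl⟩ :
      ∃ a, m = 4 * a ∨ m = 4 * a + 1 ∨ m = 4 * a + 2 ∨ m = 4 * a + 3 := ⟨m / 4, by lia⟩
  · simp [show (4 * a + 2) / 4 = a by lia, h.prefixSum_four_mul]
  · rw [show (4 * a + 1 + 2) / 4 = a by lia, h.prefixSum_four_mul_add_one, prefixSum_succ]
    convert h.abs_le_one a using 2
    ring
  · simp [show (4 * a + 2 + 2) / 4 = a + 1 by lia, h.prefixSum_four_mul_add_two]
  · rw [show (4 * a + 3 + 2) / 4 = a + 1 by lia, h.prefixSum_four_mul_add_three,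
      add_sub_cancel_left]
    exact h.abs_le_one (2 * a + 1)

theorem exists_abs_pSum_le_two_mul (h : IsRudinShapiro r) (i n : ℕ) :
    ∃ j m, n / 4 ≤ m ∧ m ≤ (n + 3) / 4 ∧ |pSum r i n| ≤ 2 * |pSum r j m| + 2 := by
  refine ⟨(i + 2) / 4, (i + n + 2) / 4 - (i + 2) / 4, by lia, by lia, ?_⟩
  have hleft := abs_le.1 (h.abs_prefixSum_sub_two_mul_le i)
  have hright := abs_le.1 (h.abs_prefixSum_sub_two_mul_le (i + n))
  rw [pSum_eq_prefixSum_sub, pSum_eq_prefixSum_sub,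
    show (i + 2) / 4 + ((i + n + 2) / 4 - (i + 2) / 4) = (i + n + 2) / 4 by lia]
  set d := prefixSum r ((i + n + 2) / 4) - prefixSum r ((i + 2) / 4)
  rw [abs_le]
  constructor <;> linarith [neg_abs_le d, le_abs_self d]

-- The shifts by `2` and `16` make the bound reproduce itself exactly under
-- `exists_abs_pSum_le_two_mul`.
theorem sq_abs_pSum_add_two_le (h : IsRudinShapiro r) {n : ℕ} (hn : 2 ≤ n) (i : ℕ) :
    (|pSum r i n| + 2) ^ 2 + 16 ≤ 16 * n := by
  induction n using Nat.strong_induction_on generalizing i with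
  | _ n ih =>
    have hnonneg := abs_nonneg (pSum r i n)
    rcases lt_or_ge n 8 with hsmall | hlarge
    · have htrivial := abs_pSum_le h.abs_le_one i n
      nlinarith
    · obtain ⟨j, m, hm, hm', hle⟩ := h.exists_abs_pSum_le_two_mul i n
      have hih := ih m (by lia) (by lia) j
      have hmn : (4 * m : ℤ) ≤ n + 3 := by lia
      nlinarith

theorem sq_pSum_le (h : IsRudinShapiro r) (i n : ℕ) : pSum r i n ^ 2 ≤ 16 * n := by
  rw [← sq_abs]
  have hnonneg := abs_nonneg (pSum r i n)
  rcases lt_or_ge n 2 with hsmall | hlarge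
  · have htrivial := abs_pSum_le h.abs_le_one i n
    nlinarith
  · nlinarith [h.sq_abs_pSum_add_two_le hlarge i]

/-! ### Windows of length `4 * n + k` -/

theorem pSum_four_mul_add_three_four_mul (h : IsRudinShapiro r) (a n : ℕ) :
    pSum r (4 * a + 3) (4 * n) = 2 * pSum r (a + 1) n + r (2 * (a + n) + 1) - r (2 * a + 1) := by
  simp only [pSum_eq_prefixSum_sub]
  linear_combination (norm := ring_nf)
    h.prefixSum_four_mul_add_three (a + n) - h.prefixSum_four_mul_add_three a

theorem pSum_four_mul_add_three_four_mul_add_one (h : IsRudinShapiro r) (a n : ℕ) :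
    pSum r (4 * a + 3) (4 * n + 1) = 2 * pSum r (a + 1) n - r (2 * a + 1) := by
  simp only [pSum_eq_prefixSum_sub]
  linear_combination (norm := ring_nf)
    h.prefixSum_four_mul (a + n + 1) - h.prefixSum_four_mul_add_three a

theorem pSum_four_mul_add_one_four_mul_add_two (h : IsRudinShapiro r) (a n : ℕ) :
    pSum r (4 * a + 1) (4 * n + 2) = pSum r (a + 1) n + pSum r a (n + 1) + r (2 * (a + n) + 1) := by
  simp only [pSum_eq_prefixSum_sub]
  linear_combination (norm := ring_nf)
    h.prefixSum_four_mul_add_three (a + n) - h.prefixSum_four_mul_add_one a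

theorem pSum_four_mul_add_three_four_mul_add_two (h : IsRudinShapiro r) (a n : ℕ) :
    pSum r (4 * a + 3) (4 * n + 2) = pSum r (a + 1) n + pSum r (a + 1) (n + 1) - r (2 * a + 1) := by
  simp only [pSum_eq_prefixSum_sub]
  linear_combination (norm := ring_nf)
    h.prefixSum_four_mul_add_one (a + n + 1) - h.prefixSum_four_mul_add_three a

theorem pSum_four_mul_four_mul_add_three (h : IsRudinShapiro r) (a n : ℕ) :
    pSum r (4 * a) (4 * n + 3) = 2 * pSum r a (n + 1) + r (2 * (a + n) + 1) := by
  simp only [pSum_eq_prefixSum_sub]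
  linear_combination (norm := ring_nf)
    h.prefixSum_four_mul_add_three (a + n) - h.prefixSum_four_mul a

section UpperBounds

variable {n : ℕ} {A B : ℤ}

theorem pSum_four_mul_le (h : IsRudinShapiro r) (hA : ∀ i, pSum r i n ≤ A) (i : ℕ) :
    pSum r i (4 * n) ≤ 2 * A + 2 := by
  obtain ⟨a, rfl | rfl | rfl | rfl⟩ :
      ∃ a, i = 4 * a ∨ i = 4 * a + 1 ∨ i = 4 * a + 2 ∨ i = 4 * a + 3 := ⟨i / 4, by lia⟩
  · have : pSum r (4 * a) (4 * n) = 2 * pSum r a n := by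
      simp only [pSum_eq_prefixSum_sub]
      linear_combination (norm := ring_nf)
        h.prefixSum_four_mul (a + n) - h.prefixSum_four_mul a
    linarith [hA a]
  · have : pSum r (4 * a + 1) (4 * n) = pSum r a n + pSum r (a + 1) n := by
      simp only [pSum_eq_prefixSum_sub]
      linear_combination (norm := ring_nf)
        h.prefixSum_four_mul_add_one (a + n) - h.prefixSum_four_mul_add_one a
    linarith [hA a, hA (a + 1)]
  · have : pSum r (4 * a + 2) (4 * n) = 2 * pSum r (a + 1) n := by
      simp only [pSum_eq_prefixSum_sub]
      linear_combination (norm := ring_nf)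
        h.prefixSum_four_mul_add_two (a + n) - h.prefixSum_four_mul_add_two a
    linarith [hA (a + 1)]
  · linarith [h.pSum_four_mul_add_three_four_mul a n, hA (a + 1),
      h.le_one (2 * (a + n) + 1), h.neg_one_le (2 * a + 1)]

theorem pSum_four_mul_add_one_le (h : IsRudinShapiro r) (hA : ∀ i, pSum r i n ≤ A)
    (i : ℕ) : pSum r i (4 * n + 1) ≤ 2 * A + 1 := by
  obtain ⟨a, rfl | rfl | rfl | rfl⟩ :
      ∃ a, i = 4 * a ∨ i = 4 * a + 1 ∨ i = 4 * a + 2 ∨ i = 4 * a + 3 := ⟨i / 4, by lia⟩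
  · have : pSum r (4 * a) (4 * n + 1) = 2 * pSum r a n + r (a + n) := by
      simp only [pSum_eq_prefixSum_sub]
      linear_combination (norm := ring_nf)
        h.prefixSum_four_mul_add_one (a + n) - h.prefixSum_four_mul a + prefixSum_succ r (a + n)
    linarith [hA a, h.le_one (a + n)]
  · have : pSum r (4 * a + 1) (4 * n + 1) = 2 * pSum r (a + 1) n + r a := by
      simp only [pSum_eq_prefixSum_sub]
      linear_combination (norm := ring_nf)
        h.prefixSum_four_mul_add_two (a + n) - h.prefixSum_four_mul_add_one a + prefixSum_succ r a
    linarith [hA (a + 1), h.le_one a]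
  · have : pSum r (4 * a + 2) (4 * n + 1) = 2 * pSum r (a + 1) n + r (2 * (a + n) + 1) := by
      simp only [pSum_eq_prefixSum_sub]
      linear_combination (norm := ring_nf)
        h.prefixSum_four_mul_add_three (a + n) - h.prefixSum_four_mul_add_two a
    linarith [hA (a + 1), h.le_one (2 * (a + n) + 1)]
  · linarith [h.pSum_four_mul_add_three_four_mul_add_one a n, hA (a + 1), h.neg_one_le (2 * a + 1)]

theorem pSum_four_mul_add_two_le (h : IsRudinShapiro r) (hA : ∀ i, pSum r i n ≤ A)
    (hB : ∀ i, pSum r i (n + 1) ≤ B) (i : ℕ) : pSum r i (4 * n + 2) ≤ A + B + 1 := by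
  obtain ⟨a, rfl | rfl | rfl | rfl⟩ :
      ∃ a, i = 4 * a ∨ i = 4 * a + 1 ∨ i = 4 * a + 2 ∨ i = 4 * a + 3 := ⟨i / 4, by lia⟩
  · have : pSum r (4 * a) (4 * n + 2) = pSum r a n + pSum r a (n + 1) + r (a + n) := by
      simp only [pSum_eq_prefixSum_sub]
      linear_combination (norm := ring_nf)
        h.prefixSum_four_mul_add_two (a + n) - h.prefixSum_four_mul a + prefixSum_succ r (a + n)
    linarith [hA a, hB a, h.le_one (a + n)]
  · linarith [h.pSum_four_mul_add_one_four_mul_add_two a n, hA (a + 1), hB a,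
      h.le_one (2 * (a + n) + 1)]
  · have : pSum r (4 * a + 2) (4 * n + 2) = pSum r (a + 1) n + pSum r a (n + 1) - r a := by
      simp only [pSum_eq_prefixSum_sub]
      linear_combination (norm := ring_nf)
        h.prefixSum_four_mul (a + n + 1) - h.prefixSum_four_mul_add_two a - prefixSum_succ r a
    linarith [hA (a + 1), hB a, h.neg_one_le a]
  · linarith [h.pSum_four_mul_add_three_four_mul_add_two a n, hA (a + 1), hB (a + 1),
      h.neg_one_le (2 * a + 1)]

theorem pSum_four_mul_add_three_le (h : IsRudinShapiro r) (hB : ∀ i, pSum r i (n + 1) ≤ B)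
    (i : ℕ) : pSum r i (4 * n + 3) ≤ 2 * B + 1 := by
  obtain ⟨a, rfl | rfl | rfl | rfl⟩ :
      ∃ a, i = 4 * a ∨ i = 4 * a + 1 ∨ i = 4 * a + 2 ∨ i = 4 * a + 3 := ⟨i / 4, by lia⟩
  · linarith [h.pSum_four_mul_four_mul_add_three a n, hB a, h.le_one (2 * (a + n) + 1)]
  · have : pSum r (4 * a + 1) (4 * n + 3) = 2 * pSum r a (n + 1) - r a := by
      simp only [pSum_eq_prefixSum_sub]
      linear_combination (norm := ring_nf)
        h.prefixSum_four_mul (a + n + 1) - h.prefixSum_four_mul_add_one a - prefixSum_succ r a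
    linarith [hB a, h.neg_one_le a]
  · have : pSum r (4 * a + 2) (4 * n + 3) = 2 * pSum r (a + 1) (n + 1) - r (a + n + 1) := by
      simp only [pSum_eq_prefixSum_sub]
      linear_combination (norm := ring_nf)
        h.prefixSum_four_mul_add_one (a + n + 1) - h.prefixSum_four_mul_add_two a -
          prefixSum_succ r (a + n + 1)
    linarith [hB (a + 1), h.neg_one_le (a + n + 1)]
  · have : pSum r (4 * a + 3) (4 * n + 3) = 2 * pSum r (a + 1) (n + 1) - r (2 * a + 1) := by
      simp only [pSum_eq_prefixSum_sub]
      linear_combination (norm := ring_nf)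
        h.prefixSum_four_mul_add_two (a + n + 1) - h.prefixSum_four_mul_add_three a
    linarith [hB (a + 1), h.neg_one_le (2 * a + 1)]

end UpperBounds

section FramedSums

variable {n : ℕ} {s : ℤ}

theorem one_mem_framedSums_one (h : IsRudinShapiro r) : 1 ∈ framedSums r 1 := by
  have h1 : r 1 = 1 := (h.four_mul_add_one 0).trans h.zero
  have h2 : r 2 = 1 := (h.four_mul_add_two 0).trans h1
  have h3 : r 3 = -1 := by rw [← h1]; exact h.four_mul_add_three 0
  have h5 : r 5 = 1 := (h.four_mul_add_one 1).trans h1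
  exact ⟨1, by simpa [pSum] using h2, h3, h5⟩

theorem two_mul_add_two_mem_framedSums (h : IsRudinShapiro r) (hs : s ∈ framedSums r n) :
    2 * s + 2 ∈ framedSums r (4 * n) := by
  obtain ⟨a, rfl, hleft, hright⟩ := hs
  refine ⟨4 * a + 2, ?_, ?_, ?_⟩
  · linear_combination h.pSum_four_mul_add_three_four_mul a n + hright - hleft
  · rw [h.eight_mul_add_five, hleft]
  · rw [show 4 * a + 2 + 4 * n = 4 * (a + n) + 2 by ring, h.eight_mul_add_five, hright]

theorem two_mul_add_one_mem_framedSums (h : IsRudinShapiro r) (hs : s ∈ framedSums r n) :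
    2 * s + 1 ∈ framedSums r (4 * n + 1) := by
  obtain ⟨a, rfl, hleft, hright⟩ := hs
  refine ⟨4 * a + 2, ?_, ?_, ?_⟩
  · linear_combination h.pSum_four_mul_add_three_four_mul_add_one a n - hleft
  · rw [h.eight_mul_add_five, hleft]
  · rw [show 4 * a + 2 + (4 * n + 1) = 4 * (a + n) + 3 by ring, h.eight_mul_add_seven, hright]

theorem two_mul_add_one_mem_framedSums_add_three (h : IsRudinShapiro r)
    (hs : s ∈ framedSums r (n + 1)) : 2 * s + 1 ∈ framedSums r (4 * n + 3) := by
  obtain ⟨a, rfl, hleft, hright⟩ := hs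
  refine ⟨4 * a + 3, ?_, ?_, ?_⟩
  · linear_combination (norm := ring_nf) h.pSum_four_mul_four_mul_add_three (a + 1) n + hright
  · rw [h.eight_mul_add_seven, hleft]
  · rw [show 4 * a + 3 + (4 * n + 3) = 4 * (a + (n + 1)) + 2 by ring, h.eight_mul_add_five, hright]

theorem two_mul_pSum_mem_framedSums_of_left (h : IsRudinShapiro r) {a : ℕ}
    (hleft : r (2 * a + 1) = -1) (hlast : r (a + n + 1) = 1) :
    2 * pSum r (a + 1) (n + 1) ∈ framedSums r (4 * n + 2) := by
  refine ⟨4 * a + 2, ?_, ?_, ?_⟩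
  · linear_combination (norm := ring_nf)
      h.pSum_four_mul_add_three_four_mul_add_two a n - hleft - pSum_succ r (a + 1) n - hlast
  · rw [h.eight_mul_add_five, hleft]
  · rw [show 4 * a + 2 + (4 * n + 2) = 4 * (a + n + 1) by ring, h.eight_mul_add_one, hlast]

theorem two_mul_pSum_mem_framedSums_of_right (h : IsRudinShapiro r) {a : ℕ}
    (hfirst : r a = -1) (hright : r (2 * (a + n) + 1) = 1) :
    2 * pSum r (a + 1) n ∈ framedSums r (4 * n + 2) := by
  refine ⟨4 * a, ?_, ?_, ?_⟩
  · linear_combination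
      h.pSum_four_mul_add_one_four_mul_add_two a n + hright + pSum_succ' r a n + hfirst
  · rw [h.eight_mul_add_one, hfirst]
  · rw [show 4 * a + (4 * n + 2) = 4 * (a + n) + 2 by ring, h.eight_mul_add_five, hright]

end FramedSums

end IsRudinShapiro

/-! ### The recursion for `M` -/

namespace IsMaxSum

variable {r M : ℕ → ℤ}

theorem map_four_mul_le (hM : IsMaxSum r M) (h : IsRudinShapiro r) (n : ℕ) :
    M (4 * n) ≤ 2 * M n + 2 :=
  hM.le_of_forall_pSum_le (h.pSum_four_mul_le (hM.pSum_le · n))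

theorem map_four_mul_add_one_le (hM : IsMaxSum r M) (h : IsRudinShapiro r) (n : ℕ) :
    M (4 * n + 1) ≤ 2 * M n + 1 :=
  hM.le_of_forall_pSum_le (h.pSum_four_mul_add_one_le (hM.pSum_le · n))

theorem map_four_mul_add_two_le (hM : IsMaxSum r M) (h : IsRudinShapiro r) (n : ℕ) :
    M (4 * n + 2) ≤ M n + M (n + 1) + 1 :=
  hM.le_of_forall_pSum_le (h.pSum_four_mul_add_two_le (hM.pSum_le · n) (hM.pSum_le · (n + 1)))

theorem map_four_mul_add_three_le (hM : IsMaxSum r M) (h : IsRudinShapiro r) (n : ℕ) :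
    M (4 * n + 3) ≤ 2 * M (n + 1) + 1 :=
  hM.le_of_forall_pSum_le (h.pSum_four_mul_add_three_le (hM.pSum_le · (n + 1)))

theorem map_one (hM : IsMaxSum r M) (h : IsRudinShapiro r) : M 1 = 1 :=
  hM.eq_of_mem_framedSums (by simpa [hM.map_zero] using hM.map_four_mul_add_one_le h 0)
    h.one_mem_framedSums_one

-- The framed window of length `n + 1` is used if `M` increases at `n`, since maximality then makes
-- its last term `1`; the one of length `n` if `M` decreases, since the term before it is then `-1`.
theorem add_succ_add_one_mem_framedSums (hM : IsMaxSum r M) (h : IsRudinShapiro r) {n : ℕ}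
    (hn : n ≠ 0 → M n ∈ framedSums r n) (hn' : M (n + 1) ∈ framedSums r (n + 1)) :
    M n + M (n + 1) + 1 ∈ framedSums r (4 * n + 2) := by
  rcases hM.succ_eq_add_one_or_sub_one h.eq_one_or_neg_one n with hincr | hdecr
  · obtain ⟨a, ha, hleft, -⟩ := hn'
    have hlast : r (a + n + 1) = 1 := by
      have := pSum_succ r (a + 1) n
      rw [add_right_comm] at this
      linarith [hM.pSum_le (a + 1) n, h.le_one (a + n + 1)]
    convert h.two_mul_pSum_mem_framedSums_of_left hleft hlast using 1
    linarith
  · have hn0 : n ≠ 0 := by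
      rintro rfl
      simp [hM.map_zero, hM.map_one h] at hdecr
    obtain ⟨a, ha, -, hright⟩ := hn hn0
    have hfirst : r a = -1 := by
      linarith [hM.pSum_le a (n + 1), pSum_succ' r a n, h.neg_one_le a]
    convert h.two_mul_pSum_mem_framedSums_of_right hfirst hright using 1
    linarith

theorem mem_framedSums (hM : IsMaxSum r M) (h : IsRudinShapiro r) {n : ℕ} (hn : n ≠ 0) :
    M n ∈ framedSums r n := by
  have mem_of_le {n : ℕ} {s : ℤ} (hle : M n ≤ s) (hs : s ∈ framedSums r n) :
      M n ∈ framedSums r n := hM.eq_of_mem_framedSums hle hs ▸ hs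
  induction n using Nat.strong_induction_on with
  | _ n ih =>
    obtain ⟨m, rfl | rfl | rfl | rfl⟩ :
        ∃ m, n = 4 * m ∨ n = 4 * m + 1 ∨ n = 4 * m + 2 ∨ n = 4 * m + 3 := ⟨n / 4, by lia⟩
    · exact mem_of_le (hM.map_four_mul_le h m)
        (h.two_mul_add_two_mem_framedSums (ih m (by lia) (by lia)))
    · rcases eq_or_ne m 0 with rfl | hm
      · simpa [hM.map_one h] using h.one_mem_framedSums_one
      · exact mem_of_le (hM.map_four_mul_add_one_le h m)
          (h.two_mul_add_one_mem_framedSums (ih m (by lia) hm))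
    · exact mem_of_le (hM.map_four_mul_add_two_le h m)
        (hM.add_succ_add_one_mem_framedSums h (ih m (by lia)) (ih (m + 1) (by lia) (by lia)))
    · exact mem_of_le (hM.map_four_mul_add_three_le h m)
        (h.two_mul_add_one_mem_framedSums_add_three (ih (m + 1) (by lia) (by lia)))

theorem map_four_mul (hM : IsMaxSum r M) (h : IsRudinShapiro r) {n : ℕ} (hn : n ≠ 0) :
    M (4 * n) = 2 * M n + 2 :=
  hM.eq_of_mem_framedSums (hM.map_four_mul_le h n)
    (h.two_mul_add_two_mem_framedSums (hM.mem_framedSums h hn))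

theorem map_four_mul_add_one (hM : IsMaxSum r M) (h : IsRudinShapiro r) (n : ℕ) :
    M (4 * n + 1) = 2 * M n + 1 := by
  rcases eq_or_ne n 0 with rfl | hn
  · simp [hM.map_zero, hM.map_one h]
  · exact hM.eq_of_mem_framedSums (hM.map_four_mul_add_one_le h n)
      (h.two_mul_add_one_mem_framedSums (hM.mem_framedSums h hn))

theorem map_four_mul_add_two (hM : IsMaxSum r M) (h : IsRudinShapiro r) (n : ℕ) :
    M (4 * n + 2) = M n + M (n + 1) + 1 :=
  hM.eq_of_mem_framedSums (hM.map_four_mul_add_two_le h n)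
    (hM.add_succ_add_one_mem_framedSums h (hM.mem_framedSums h)
      (hM.mem_framedSums h n.succ_ne_zero))

theorem map_four_mul_add_three (hM : IsMaxSum r M) (h : IsRudinShapiro r) (n : ℕ) :
    M (4 * n + 3) = 2 * M (n + 1) + 1 :=
  hM.eq_of_mem_framedSums (hM.map_four_mul_add_three_le h n)
    (h.two_mul_add_one_mem_framedSums_add_three (hM.mem_framedSums h n.succ_ne_zero))

theorem map_add_one_eq (hM : IsMaxSum r M) (h : IsRudinShapiro r) (n : ℕ) :
    M n + 1 = 2 * (M (n / 4) + 1) +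
      dcoef (n % 4 : ℕ) * if n = 0 then -1 else M n - M (n - 1) := by
  obtain ⟨m, rfl | rfl | rfl | rfl⟩ :
      ∃ m, n = 4 * m ∨ n = 4 * m + 1 ∨ n = 4 * m + 2 ∨ n = 4 * m + 3 := ⟨n / 4, by lia⟩
  · have hd : dcoef (4 * m % 4 : ℕ) = 1 := by simp [dcoef]
    rcases m with _ | m
    · rw [hd, if_pos rfl, Nat.zero_div, Nat.mul_zero, hM.map_zero]
      norm_num
    · rw [hd, if_neg (by lia), show 4 * (m + 1) / 4 = m + 1 by lia,
        show 4 * (m + 1) - 1 = 4 * m + 3 by lia, hM.map_four_mul h m.succ_ne_zero,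
        hM.map_four_mul_add_three h]
      ring
  · have hd : dcoef ((4 * m + 1) % 4 : ℕ) = 0 := by simp [dcoef]
    rw [hd, show (4 * m + 1) / 4 = m by lia, hM.map_four_mul_add_one h]
    ring
  · have hd : dcoef ((4 * m + 2) % 4 : ℕ) = 1 := by simp [dcoef]
    rw [hd, if_neg (by lia), show (4 * m + 2) / 4 = m by lia,
      show 4 * m + 2 - 1 = 4 * m + 1 by lia, hM.map_four_mul_add_one h,
      hM.map_four_mul_add_two h]
    ring
  · have hd : dcoef ((4 * m + 3) % 4 : ℕ) = 2 := by simp [dcoef]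
    rw [hd, if_neg (by lia), show (4 * m + 3) / 4 = m by lia,
      show 4 * m + 3 - 1 = 4 * m + 2 by lia, hM.map_four_mul_add_two h,
      hM.map_four_mul_add_three h]
    ring

theorem abs_sub_le_rpow_half (hM : IsMaxSum r M) (h : IsRudinShapiro r) (m n : ℕ) :
    |(M m : ℝ) - M n| ≤ 4 * |(m : ℝ) - n| ^ (1 / 2 : ℝ) := by
  wlog hnm : n ≤ m generalizing m n
  · rw [abs_sub_comm, abs_sub_comm (m : ℝ)]
    exact this n m (le_of_not_ge hnm)
  obtain ⟨k, rfl⟩ := Nat.exists_eq_add_of_le hnm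
  obtain ⟨i, hi⟩ := hM.exists_abs_sub_le_abs_pSum n k
  have hsq : ((M (n + k) : ℝ) - M n) ^ 2 ≤ 16 * k := by
    exact_mod_cast (sq_le_sq.2 hi).trans (h.sq_pSum_le i k)
  rw [← Real.sqrt_eq_rpow, Nat.cast_add, add_sub_cancel_left, Nat.abs_cast]
  refine abs_le_of_sq_le_sq ?_ (by positivity)
  rw [mul_pow, Real.sq_sqrt k.cast_nonneg]
  linarith

end IsMaxSum

/-! ### The limit function -/

section Limit

open Filter Topology

theorem abs_natFloor_sub_natFloor_le {a b : ℝ} (ha : 0 ≤ a) (hb : 0 ≤ b) :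
    |(⌊a⌋₊ : ℝ) - ⌊b⌋₊| ≤ |a - b| + 1 := by
  have := Nat.floor_le ha
  have := Nat.floor_le hb
  have := Nat.lt_floor_add_one a
  have := Nat.lt_floor_add_one b
  rw [abs_le]
  constructor <;> linarith [neg_abs_le (a - b), le_abs_self (a - b)]

theorem abs_sub_le_rpow_of_tendsto_scaling {ι : Type*} {l : Filter ι} [l.NeBot] {f : ℕ → ℝ}
    {C α : ℝ} (hα : 0 ≤ α) (hf : ∀ m n : ℕ, |f m - f n| ≤ C * |(m : ℝ) - n| ^ α)
    {t : ι → ℝ} (ht : Tendsto t l atTop) {x y u v : ℝ} (hx : 0 ≤ x) (hy : 0 ≤ y)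
    (hu : Tendsto (fun j => f ⌊t j * x⌋₊ / t j ^ α) l (𝓝 u))
    (hv : Tendsto (fun j => f ⌊t j * y⌋₊ / t j ^ α) l (𝓝 v)) :
    |u - v| ≤ C * |x - y| ^ α := by
  have hC : 0 ≤ C := by simpa using (abs_nonneg _).trans (hf 1 0)
  have hlim : Tendsto (fun j => C * (|x - y| + (t j)⁻¹) ^ α) l (𝓝 (C * |x - y| ^ α)) := by
    simpa using (((tendsto_inv_atTop_zero.comp ht).const_add |x - y|).rpow_const
      (.inr hα)).const_mul C
  refine le_of_tendsto_of_tendsto (hu.sub hv).abs hlim ?_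
  filter_upwards [ht.eventually_gt_atTop 0] with j hj
  have hfloor : |(⌊t j * x⌋₊ : ℝ) - ⌊t j * y⌋₊| ≤ t j * (|x - y| + (t j)⁻¹) := by
    have hxy : t j * |x - y| = |t j * x - t j * y| := by
      rw [← mul_sub, abs_mul, abs_of_pos hj]
    rw [mul_add, mul_inv_cancel₀ hj.ne', hxy]
    exact abs_natFloor_sub_natFloor_le (by positivity) (by positivity)
  calc |f ⌊t j * x⌋₊ / t j ^ α - f ⌊t j * y⌋₊ / t j ^ α|
      = |f ⌊t j * x⌋₊ - f ⌊t j * y⌋₊| / t j ^ α := by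
        rw [← sub_div, abs_div, abs_of_pos (Real.rpow_pos_of_pos hj α)]
    _ ≤ C * (t j * (|x - y| + (t j)⁻¹)) ^ α / t j ^ α := by
        gcongr
        exact (hf _ _).trans (by gcongr)
    _ = C * (|x - y| + (t j)⁻¹) ^ α := by
        rw [Real.mul_rpow hj.le (by positivity)]
        field_simp

theorem acoef_eq (M : ℕ → ℤ) (x : ℝ) (j : ℕ) :
    acoef M x j = if ⌊(4 : ℝ) ^ j * x⌋₊ = 0 then -1
      else M ⌊(4 : ℝ) ^ j * x⌋₊ - M (⌊(4 : ℝ) ^ j * x⌋₊ - 1) := by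
  simp only [acoef, Int.floor_toNat, Nat.floor_eq_zero]

theorem floor_four_pow_mul (x : ℝ) (j : ℕ) :
    ⌊(4 : ℝ) ^ j * x⌋₊ = ⌊(4 : ℝ) ^ (j + 1) * x⌋₊ / 4 := by
  rw [← Nat.floor_div_ofNat]
  congr 1
  ring

theorem digit_succ_eq {x : ℝ} (hx : 0 ≤ x) (j : ℕ) :
    digit x (j + 1) = (⌊(4 : ℝ) ^ (j + 1) * x⌋₊ % 4 : ℕ) := by
  rw [digit, Nat.add_sub_cancel, ← Int.natCast_floor_eq_floor (by positivity),
    ← Int.natCast_floor_eq_floor (by positivity), floor_four_pow_mul x j]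
  lia

theorem abs_dcoef_le_two (y : ℤ) : |dcoef y| ≤ 2 := by
  unfold dcoef
  split_ifs <;> norm_num

namespace IsMaxSum

variable {r M : ℕ → ℤ}

theorem abs_acoef_le_one (hM : IsMaxSum r M) (hr : ∀ n, |r n| ≤ 1) (x : ℝ) (j : ℕ) :
    |acoef M x j| ≤ 1 := by
  rw [acoef_eq]
  split_ifs with hzero
  · norm_num
  · obtain ⟨n, hn⟩ := Nat.exists_eq_succ_of_ne_zero hzero
    rw [hn]
    exact hM.abs_succ_sub_le hr n

theorem summable_dcoef_mul_acoef (hM : IsMaxSum r M) (hr : ∀ n, |r n| ≤ 1) (x : ℝ) :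
    Summable fun j : ℕ =>
      ((dcoef (digit x (j + 1)) * acoef M x (j + 1) : ℤ) : ℝ) / 2 ^ (j + 1) := by
  refine .of_norm_bounded summable_geometric_two fun j => ?_
  have hterm : |dcoef (digit x (j + 1)) * acoef M x (j + 1)| ≤ 2 := by
    rw [abs_mul]
    exact mul_le_mul (abs_dcoef_le_two _) (hM.abs_acoef_le_one hr x _) (abs_nonneg _) zero_le_two
  calc ‖((dcoef (digit x (j + 1)) * acoef M x (j + 1) : ℤ) : ℝ) / 2 ^ (j + 1)‖
      = |((dcoef (digit x (j + 1)) * acoef M x (j + 1) : ℤ) : ℝ)| / 2 ^ (j + 1) := by simp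
    _ ≤ 2 / 2 ^ (j + 1) := by gcongr; exact_mod_cast hterm
    _ = (1 / 2) ^ j := by rw [pow_succ, one_div_pow]; field_simp

theorem sum_dcoef_mul_acoef (hM : IsMaxSum r M) (h : IsRudinShapiro r) {x : ℝ} (hx : 0 ≤ x)
    (J : ℕ) :
    ∑ j ∈ Finset.range J, ((dcoef (digit x (j + 1)) * acoef M x (j + 1) : ℤ) : ℝ) / 2 ^ (j + 1) =
      (M ⌊(4 : ℝ) ^ J * x⌋₊ + 1) / 2 ^ J - (M ⌊x⌋₊ + 1) := by
  have hterm (j : ℕ) : ((dcoef (digit x (j + 1)) * acoef M x (j + 1) : ℤ) : ℝ) / 2 ^ (j + 1) =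
      (M ⌊(4 : ℝ) ^ (j + 1) * x⌋₊ + 1) / 2 ^ (j + 1) - (M ⌊(4 : ℝ) ^ j * x⌋₊ + 1) / 2 ^ j := by
    have hrec : (M ⌊(4 : ℝ) ^ (j + 1) * x⌋₊ : ℝ) + 1 = 2 * (M ⌊(4 : ℝ) ^ j * x⌋₊ + 1) +
        (dcoef (digit x (j + 1)) * acoef M x (j + 1) : ℤ) := by
      rw [digit_succ_eq hx, acoef_eq, floor_four_pow_mul x j]
      exact_mod_cast hM.map_add_one_eq h ⌊(4 : ℝ) ^ (j + 1) * x⌋₊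
    rw [hrec, pow_succ]
    field_simp
    ring
  rw [Finset.sum_congr rfl fun j _ => hterm j,
    Finset.sum_range_sub (fun j => ((M ⌊(4 : ℝ) ^ j * x⌋₊ : ℝ) + 1) / 2 ^ j) J]
  simp only [pow_zero, one_mul, div_one]

theorem tendsto_map_floor_four_pow_mul (hM : IsMaxSum r M) (h : IsRudinShapiro r) {x : ℝ}
    (hx : 0 ≤ x) :
    Tendsto (fun J : ℕ => ((M ⌊(4 : ℝ) ^ J * x⌋₊ : ℝ) + 1) / ((4 : ℝ) ^ J) ^ (1 / 2 : ℝ)) atTop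
      (𝓝 (afun M x + (M ⌊x⌋₊ + 1))) := by
  have hpow (J : ℕ) : ((4 : ℝ) ^ J) ^ (1 / 2 : ℝ) = 2 ^ J := by
    rw [← Real.sqrt_eq_rpow, show (4 : ℝ) ^ J = (2 ^ J) ^ 2 by rw [← pow_mul']; norm_num [pow_mul],
      Real.sqrt_sq (by positivity)]
  have hsum := (hM.summable_dcoef_mul_acoef h.abs_le_one x).tendsto_sum_tsum_nat.add_const
    ((M ⌊x⌋₊ : ℝ) + 1)
  simpa only [afun, hM.sum_dcoef_mul_acoef h hx, sub_add_cancel, hpow] using hsum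

end IsMaxSum

end Limit

theorem afun_holder_half_general {r M : ℕ → ℤ} (h : IsRudinShapiro r) (hM : IsMaxSum r M) {x y : ℝ}
    (hx : 0 ≤ x) (hy : 0 ≤ y) :
    |(afun M x + M ⌊x⌋₊) - (afun M y + M ⌊y⌋₊)| ≤ 4 * |x - y| ^ (1 / 2 : ℝ) := by
  have hlip (m n : ℕ) : |((M m : ℝ) + 1) - (M n + 1)| ≤ 4 * |(m : ℝ) - n| ^ (1 / 2 : ℝ) := by
    simpa using hM.abs_sub_le_rpow_half h m n
  simpa [← add_assoc] using abs_sub_le_rpow_of_tendsto_scaling (f := fun n => (M n : ℝ) + 1)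
    one_half_pos.le hlip (tendsto_pow_atTop_atTop_of_one_lt (by norm_num : (1 : ℝ) < 4)) hx hy
    (hM.tendsto_map_floor_four_pow_mul h hx) (hM.tendsto_map_floor_four_pow_mul h hy)

/-- There exists `c > 0` such that for all
`x, y ∈ (0, 1)`, `|a(x) − a(y)| ≤ c·|x − y|^(1/2)`: the function `a` is
Hölder continuous of exponent `1/2` on `(0, 1)`. -/
theorem afun_holder_half
    (r : ℕ → ℤ) (hr0 : r 0 = 1)
    (hre : ∀ n, r (2 * n) = r n)
    (hro : ∀ n, r (2 * n + 1) = (-1) ^ n * r n)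
    (M : ℕ → ℤ)
    (hM : ∀ n, IsGreatest (Set.range fun i => pSum r i n) (M n)) :
    ∃ c : ℝ, 0 < c ∧ ∀ x ∈ Set.Ioo (0 : ℝ) 1, ∀ y ∈ Set.Ioo (0 : ℝ) 1,
      |afun M x - afun M y| ≤ c * |x - y| ^ ((1 : ℝ) / 2) := by
  refine ⟨4, by norm_num, fun x hx y hy => ?_⟩
  simpa [Nat.floor_eq_zero.2 hx.2, Nat.floor_eq_zero.2 hy.2] using
    afun_holder_half_general ⟨hr0, hre, hro⟩ hM hx.1.le hy.1.le
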